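/- Let g : D → ℂ' be smooth with 1 + |g|² invertible, and set ν = (1/(1+|g|²))·(g+ḡ, j(g−ḡ), 1−|g|²) : D → 𝕊²₁ ⊂ ℝ³ (signature (+,−,+)). Then ν_{zz̄} is a real-scalar multiple of ν at every point if and only if g satisfies g_{zz̄} − (2ḡ/(1+|g|²))g_z g_z̄ = 0 and its conjugate equation. -/

import Mathlib

noncomputable section

/-- Paracomplex numbers `z = x + jy` with `j² = 1`, represented as pairs `(x, y)`. -/
abbrev PC := ℝ × ℝ

/-- Paracomplex multiplication: `(x + jy)(u + jv) = (xu + yv) + j(xv + yu)`. -/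
def pmul (z w : PC) : PC := (z.1 * w.1 + z.2 * w.2, z.1 * w.2 + z.2 * w.1)

/-- Paracomplex conjugation `z̄ = x − jy`. -/
def pconj (z : PC) : PC := (z.1, -z.2)

/-- Squared modulus `|z|² = z·z̄ = x² − y²`. -/
def pnormSq (z : PC) : ℝ := z.1 ^ 2 - z.2 ^ 2

/-- The paracomplex unit `j`. -/
def pj : PC := (0, 1)

/-- The paracomplex unit `1`. -/
def pone : PC := (1, 0)

/-- Partial derivative in the `x` direction. -/
def dX (f : PC → PC) (p : PC) : PC := fderiv ℝ f p (1, 0)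

/-- Partial derivative in the `y` direction. -/
def dY (f : PC → PC) (p : PC) : PC := fderiv ℝ f p (0, 1)

/-- Para-Wirtinger derivative `f_z = (f_x + j f_y)/2`. -/
def Dz (f : PC → PC) (p : PC) : PC := (1/2 : ℝ) • (dX f p + pmul pj (dY f p))

/-- Para-Wirtinger derivative `f_z̄ = (f_x − j f_y)/2`. -/
def Dzbar (f : PC → PC) (p : PC) : PC := (1/2 : ℝ) • (dX f p - pmul pj (dY f p))

/-- The Gauss map `ν = (1/(1+|g|²))·(g+ḡ, j(g−ḡ), 1−|g|²)` with paracomplex-valued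
components. -/
def nuC (g : PC → PC) (p : PC) : Fin 3 → PC :=
  (1 / (1 + pnormSq (g p))) •
    ![g p + pconj (g p), pmul pj (g p - pconj (g p)), ((1 - pnormSq (g p), 0) : PC)]

/-- The vector `(1−ḡ², j(1+ḡ²), −2ḡ)`. -/
def V1 (g : PC → PC) (p : PC) : Fin 3 → PC :=
  ![pone - pmul (pconj (g p)) (pconj (g p)),
    pmul pj (pone + pmul (pconj (g p)) (pconj (g p))),
    (-2 : ℝ) • pconj (g p)]

/-- The vector `(1−g², −j(1+g²), −2g)`. -/
def V2 (g : PC → PC) (p : PC) : Fin 3 → PC :=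
  ![pone - pmul (g p) (g p),
    -(pmul pj (pone + pmul (g p) (g p))),
    (-2 : ℝ) • g p]

/-! The Gauss map is `ν = N ∘ g` for the inverse stereographic projection `N = nuC id`. With
`w = 1 + |z|²`, its Wirtinger derivatives `N_z = F` and `N_z̄ = F̄`, where `F = w⁻² V1` and
`F̄ = w⁻² V2`, satisfy the structure equations `F_z = -(2z̄/w) F` and `F_z̄ = -(2/w²) N`. The
chain rule then gives, with `T = g_{zz̄} - (2ḡ/w) g_z g_z̄`,
`ν_{zz̄} = T F + T̄ F̄ - (2/w²)(|g_z|² + |g_z̄|²) ν`,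
so that `ν_{zz̄}` is a real multiple of `ν` exactly when `T F + T̄ F̄` is. Pairing with `F̄`, which
is null and orthogonal to `ν` but not to `F`, shows that this happens only for `T = 0`. The
conjugate equation is `T̄ = 0`. -/

section Algebra

@[simp] lemma pmul_fst (z w : PC) : (pmul z w).1 = z.1 * w.1 + z.2 * w.2 := rfl

@[simp] lemma pmul_snd (z w : PC) : (pmul z w).2 = z.1 * w.2 + z.2 * w.1 := rfl

@[simp] lemma pconj_fst (z : PC) : (pconj z).1 = z.1 := rfl

@[simp] lemma pconj_snd (z : PC) : (pconj z).2 = -z.2 := rfl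

@[simp] lemma zero_pmul (z : PC) : pmul 0 z = 0 := by ext <;> simp

@[simp] lemma pconj_zero : pconj 0 = 0 := by ext <;> simp

@[simp] lemma pconj_pconj (z : PC) : pconj (pconj z) = z := by ext <;> simp

@[simp] lemma pnormSq_pconj (z : PC) : pnormSq (pconj z) = pnormSq z := by simp [pnormSq]

lemma pconj_eq_zero {z : PC} : pconj z = 0 ↔ z = 0 := by simp [Prod.ext_iff]

lemma ofReal_pmul (r : ℝ) (z : PC) : pmul (r, 0) z = r • z := by ext <;> simp

end Algebra

section Frame

/-- The `ℂ'`-bilinear extension of the metric of signature `(+, -, +)` on `ℝ³`. -/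
def lorentz (X Y : Fin 3 → PC) : PC := pmul (X 0) (Y 0) - pmul (X 1) (Y 1) + pmul (X 2) (Y 2)

lemma lorentz_add_right (X Y Z : Fin 3 → PC) :
    lorentz X (fun i => Y i + Z i) = lorentz X Y + lorentz X Z := by
  ext <;> simp [lorentz] <;> ring

lemma lorentz_pmul_right (X : Fin 3 → PC) (a : PC) (Y : Fin 3 → PC) :
    lorentz X (fun i => pmul a (Y i)) = pmul a (lorentz X Y) := by
  ext <;> simp [lorentz] <;> ring

lemma lorentz_smul_right (X : Fin 3 → PC) (r : ℝ) (Y : Fin 3 → PC) :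
    lorentz X (r • Y) = r • lorentz X Y := by
  ext <;> simp [lorentz] <;> ring

variable (g : PC → PC) (p : PC)

lemma V2_eq_pconj_V1 (i : Fin 3) : V2 g p i = pconj (V1 g p i) := by
  fin_cases i <;> ext <;> simp [V1, V2, pone, pj] <;> ring

lemma lorentz_V2_V1 : lorentz (V2 g p) (V1 g p) = (2 * (1 + pnormSq (g p)) ^ 2, 0) := by
  ext <;> simp [lorentz, V1, V2, pone, pj, pnormSq] <;> ring

lemma lorentz_V2_V2 : lorentz (V2 g p) (V2 g p) = 0 := by
  ext <;> simp [lorentz, V2, pone, pj] <;> ring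

lemma lorentz_V2_nuC : lorentz (V2 g p) (nuC g p) = 0 := by
  ext <;> simp [lorentz, V2, nuC, pone, pj, pnormSq] <;> ring

variable {g p}

lemma eq_zero_of_pmul_V1_add_pmul_V2_eq_smul_nuC (hw : 1 + pnormSq (g p) ≠ 0) {a b : PC} {ρ : ℝ}
    (h : ∀ i, pmul a (V1 g p i) + pmul b (V2 g p i) = ρ • nuC g p i) : a = 0 := by
  have pairing : lorentz (V2 g p) (fun i => pmul a (V1 g p i) + pmul b (V2 g p i)) =
      lorentz (V2 g p) (ρ • nuC g p) := congrArg _ (funext h)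
  rw [lorentz_add_right, lorentz_pmul_right, lorentz_pmul_right, lorentz_smul_right,
    lorentz_V2_V1, lorentz_V2_V2, lorentz_V2_nuC] at pairing
  simpa [Prod.ext_iff, hw] using pairing

end Frame

section WirtingerCalculus

/-- Paracomplex multiplication as a continuous real-bilinear map. -/
def pmulCLM : PC →L[ℝ] PC →L[ℝ] PC :=
  (LinearMap.mk₂ ℝ pmul
    (fun _ _ _ => by ext <;> simp <;> ring) (fun _ _ _ => by ext <;> simp <;> ring)
    (fun _ _ _ => by ext <;> simp <;> ring)
    (fun _ _ _ => by ext <;> simp <;> ring)).toContinuousBilinearMap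

@[simp] lemma pmulCLM_apply (z w : PC) : pmulCLM z w = pmul z w := rfl

/-- Paracomplex conjugation as a continuous real-linear map. -/
def pconjCLM : PC →L[ℝ] PC :=
  (ContinuousLinearMap.fst ℝ ℝ ℝ).prod (-ContinuousLinearMap.snd ℝ ℝ ℝ)

@[simp] lemma pconjCLM_apply (z : PC) : pconjCLM z = pconj z := rfl

/-- The real-linear map `A dz + B dz̄`. -/
def wirtingerCLM (A B : PC) : PC →L[ℝ] PC := pmulCLM A + (pmulCLM B).comp pconjCLM

@[simp] lemma wirtingerCLM_apply (A B v : PC) :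
    wirtingerCLM A B v = pmul A v + pmul B (pconj v) := rfl

/-- The coefficient of `dz` in a real-linear map, so that `Dz f p = dzCoeff (fderiv ℝ f p)`. -/
def dzCoeff : (PC →L[ℝ] PC) →L[ℝ] PC :=
  (1 / 2 : ℝ) • (ContinuousLinearMap.apply ℝ PC ((1, 0) : PC) +
    (pmulCLM pj).comp (ContinuousLinearMap.apply ℝ PC ((0, 1) : PC)))

/-- The coefficient of `dz̄` in a real-linear map, so that
`Dzbar f p = dzbarCoeff (fderiv ℝ f p)`. -/
def dzbarCoeff : (PC →L[ℝ] PC) →L[ℝ] PC :=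
  (1 / 2 : ℝ) • (ContinuousLinearMap.apply ℝ PC ((1, 0) : PC) -
    (pmulCLM pj).comp (ContinuousLinearMap.apply ℝ PC ((0, 1) : PC)))

lemma dzCoeff_apply (L : PC →L[ℝ] PC) :
    dzCoeff L = (1 / 2 : ℝ) • (L (1, 0) + pmul pj (L (0, 1))) := rfl

lemma dzbarCoeff_apply (L : PC →L[ℝ] PC) :
    dzbarCoeff L = (1 / 2 : ℝ) • (L (1, 0) - pmul pj (L (0, 1))) := rfl

lemma dzCoeff_wirtingerCLM (A B : PC) : dzCoeff (wirtingerCLM A B) = A := by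
  ext <;> simp [dzCoeff_apply, pj] <;> ring

lemma dzbarCoeff_wirtingerCLM (A B : PC) : dzbarCoeff (wirtingerCLM A B) = B := by
  ext <;> simp [dzbarCoeff_apply, pj] <;> ring

lemma wirtingerCLM_dzCoeff_dzbarCoeff (L : PC →L[ℝ] PC) :
    wirtingerCLM (dzCoeff L) (dzbarCoeff L) = L := by
  ext <;> simp [dzCoeff_apply, dzbarCoeff_apply, pj] <;> ring

/-- `f` is real-differentiable at `p` with differential `A dz + B dz̄`, i.e. with Wirtinger
derivatives `f_z = A` and `f_z̄ = B`. -/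
def HasWirtingerDerivAt (f : PC → PC) (A B p : PC) : Prop := HasFDerivAt f (wirtingerCLM A B) p

variable {f h g : PC → PC} {A B A' B' p : PC}

lemma hasWirtingerDerivAt_of_hasFDerivAt {L : PC →L[ℝ] PC} (hf : HasFDerivAt f L p) :
    HasWirtingerDerivAt f (dzCoeff L) (dzbarCoeff L) p := by
  rwa [HasWirtingerDerivAt, wirtingerCLM_dzCoeff_dzbarCoeff]

lemma hasWirtingerDerivAt_of_differentiableAt (hf : DifferentiableAt ℝ f p) :
    HasWirtingerDerivAt f (Dz f p) (Dzbar f p) p :=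
  hasWirtingerDerivAt_of_hasFDerivAt hf.hasFDerivAt

lemma hasWirtingerDerivAt_const (c p : PC) : HasWirtingerDerivAt (fun _ => c) 0 0 p := by
  refine (hasFDerivAt_const c p).congr_fderiv ?_
  ext <;> simp

lemma hasWirtingerDerivAt_id (p : PC) : HasWirtingerDerivAt (fun z => z) pone 0 p := by
  refine (hasFDerivAt_id p).congr_fderiv ?_
  ext <;> simp [pone]

lemma hasWirtingerDerivAt_pconj (p : PC) : HasWirtingerDerivAt pconj 0 pone p := by
  refine pconjCLM.hasFDerivAt.congr_fderiv ?_
  ext <;> simp [pone]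

lemma hasWirtingerDerivAt_comp_pnormSq {φ : ℝ → ℝ} {φ' : ℝ} (hφ : HasDerivAt φ φ' (pnormSq p)) :
    HasWirtingerDerivAt (fun z => (φ (pnormSq z), 0)) (φ' • pconj p) (φ' • p) p := by
  have h_normSq : HasFDerivAt pnormSq _ p :=
    ((hasFDerivAt_fst (𝕜 := ℝ) (p := p)).pow 2).sub ((hasFDerivAt_snd (𝕜 := ℝ) (p := p)).pow 2)
  refine ((hφ.comp_hasFDerivAt p h_normSq).prodMk (hasFDerivAt_const 0 p)).congr_fderiv ?_
  ext <;> simp <;> ring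

namespace HasWirtingerDerivAt

lemma Dz_eq (hf : HasWirtingerDerivAt f A B p) : Dz f p = A :=
  (congrArg dzCoeff hf.fderiv).trans (dzCoeff_wirtingerCLM A B)

lemma Dzbar_eq (hf : HasWirtingerDerivAt f A B p) : Dzbar f p = B :=
  (congrArg dzbarCoeff hf.fderiv).trans (dzbarCoeff_wirtingerCLM A B)

lemma comp (hf : HasWirtingerDerivAt f A B (g p)) (hg : HasWirtingerDerivAt g A' B' p) :
    HasWirtingerDerivAt (fun q => f (g q)) (pmul A A' + pmul B (pconj B'))
      (pmul A B' + pmul B (pconj A')) p := by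
  refine (HasFDerivAt.comp p hf hg).congr_fderiv ?_
  ext <;> simp <;> ring

lemma conj (hf : HasWirtingerDerivAt f A B p) :
    HasWirtingerDerivAt (fun q => pconj (f q)) (pconj B) (pconj A) p := by
  refine (pconjCLM.hasFDerivAt.comp p hf).congr_fderiv ?_
  ext <;> simp <;> ring

lemma add (hf : HasWirtingerDerivAt f A B p) (hh : HasWirtingerDerivAt h A' B' p) :
    HasWirtingerDerivAt (fun q => f q + h q) (A + A') (B + B') p := by
  refine (HasFDerivAt.add hf hh).congr_fderiv ?_
  ext <;> simp <;> ring

lemma sub (hf : HasWirtingerDerivAt f A B p) (hh : HasWirtingerDerivAt h A' B' p) :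
    HasWirtingerDerivAt (fun q => f q - h q) (A - A') (B - B') p := by
  refine (HasFDerivAt.sub hf hh).congr_fderiv ?_
  ext <;> simp <;> ring

lemma mul (hf : HasWirtingerDerivAt f A B p) (hh : HasWirtingerDerivAt h A' B' p) :
    HasWirtingerDerivAt (fun q => pmul (f q) (h q)) (pmul A (h p) + pmul (f p) A')
      (pmul B (h p) + pmul (f p) B') p := by
  refine (pmulCLM.hasFDerivAt_of_bilinear hf hh).congr_fderiv ?_
  ext <;> simp <;> ring

lemma radial_smul {φ : ℝ → ℝ} {φ' : ℝ} (hφ : HasDerivAt φ φ' (pnormSq p))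
    (hf : HasWirtingerDerivAt f A B p) :
    HasWirtingerDerivAt (fun z => φ (pnormSq z) • f z)
      (φ' • pmul (pconj p) (f p) + φ (pnormSq p) • A)
      (φ' • pmul p (f p) + φ (pnormSq p) • B) p := by
  simp only [← ofReal_pmul]
  refine ((hasWirtingerDerivAt_comp_pnormSq hφ).mul hf).congr_fderiv ?_
  ext <;> simp <;> ring

end HasWirtingerDerivAt

lemma Dz_pconj (hf : DifferentiableAt ℝ f p) : Dz (fun q => pconj (f q)) p = pconj (Dzbar f p) :=
  (hasWirtingerDerivAt_of_differentiableAt hf).conj.Dz_eq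

lemma Dzbar_pconj (hf : DifferentiableAt ℝ f p) :
    Dzbar (fun q => pconj (f q)) p = pconj (Dz f p) :=
  (hasWirtingerDerivAt_of_differentiableAt hf).conj.Dzbar_eq

end WirtingerCalculus

section SecondDerivatives

variable {f : PC → PC} {p : PC}

lemma hasFDerivAt_Dz (hf : ContDiffAt ℝ 2 f p) :
    HasFDerivAt (Dz f) (dzCoeff.comp (fderiv ℝ (fderiv ℝ f) p)) p :=
  dzCoeff.hasFDerivAt.comp p
    ((hf.fderiv_right (m := 1) le_rfl).differentiableAt one_ne_zero).hasFDerivAt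

lemma hasFDerivAt_Dzbar (hf : ContDiffAt ℝ 2 f p) :
    HasFDerivAt (Dzbar f) (dzbarCoeff.comp (fderiv ℝ (fderiv ℝ f) p)) p :=
  dzbarCoeff.hasFDerivAt.comp p
    ((hf.fderiv_right (m := 1) le_rfl).differentiableAt one_ne_zero).hasFDerivAt

lemma Dz_Dzbar_comm (hf : ContDiffAt ℝ 2 f p) : Dz (Dzbar f) p = Dzbar (Dz f) p := by
  have h_symm : fderiv ℝ (fderiv ℝ f) p (1, 0) (0, 1) = fderiv ℝ (fderiv ℝ f) p (0, 1) (1, 0) :=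
    hf.isSymmSndFDerivAt (by simp) _ _
  rw [(hasWirtingerDerivAt_of_hasFDerivAt (hasFDerivAt_Dzbar hf)).Dz_eq,
    (hasWirtingerDerivAt_of_hasFDerivAt (hasFDerivAt_Dz hf)).Dzbar_eq]
  ext <;> simp [dzCoeff_apply, dzbarCoeff_apply, h_symm, pj] <;> ring

lemma eventually_differentiableAt_of_contDiffAt (hf : ContDiffAt ℝ 2 f p) :
    ∀ᶠ q in nhds p, DifferentiableAt ℝ f q :=
  (hf.eventually (by simp)).mono fun _ hq => hq.differentiableAt two_ne_zero

lemma Dzbar_Dz_pconj (hf : ContDiffAt ℝ 2 f p) :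
    Dzbar (fun q => Dz (fun r => pconj (f r)) q) p = pconj (Dzbar (Dz f) p) := by
  have h_Dz : (fun q => Dz (fun r => pconj (f r)) q) =ᶠ[nhds p] fun q => pconj (Dzbar f q) :=
    (eventually_differentiableAt_of_contDiffAt hf).mono fun _ => Dz_pconj
  calc Dzbar (fun q => Dz (fun r => pconj (f r)) q) p
      = Dzbar (fun q => pconj (Dzbar f q)) p := congrArg dzbarCoeff h_Dz.fderiv_eq
    _ = pconj (Dz (Dzbar f) p) := Dzbar_pconj (hasFDerivAt_Dzbar hf).differentiableAt
    _ = pconj (Dzbar (Dz f) p) := by rw [Dz_Dzbar_comm hf]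

end SecondDerivatives

section StereographicProjection

/-- The numerator of the inverse stereographic projection: `nuC id z = X / (1 + |z|²)`. -/
def stereoNumerator (z : PC) : Fin 3 → PC :=
  ![z + pconj z, pmul pj (z - pconj z), (1 - pnormSq z, 0)]

/-- The derivative `∂_z` of `stereoNumerator`. -/
def stereoNumeratorDz (z : PC) : Fin 3 → PC := ![pone, pj, -pconj z]

/-- The derivative `∂_z̄` of `V1 id`. -/
def V1Dzbar (z : PC) : Fin 3 → PC :=
  ![(-2 : ℝ) • pconj z, (2 : ℝ) • pmul pj (pconj z), (-2 : ℝ) • pone]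

/-- The derivative `N_z = V1 / (1 + |z|²)²` of the inverse stereographic projection `N = nuC id`.
As `N` is real, `N_z̄` is its conjugate. -/
def stereoFrame (z : PC) (i : Fin 3) : PC := ((1 + pnormSq z) ^ 2)⁻¹ • V1 id z i

variable {z : PC}

lemma nuC_eq_smul_stereoNumerator (g : PC → PC) (p : PC) :
    nuC g p = (1 / (1 + pnormSq (g p))) • stereoNumerator (g p) := rfl

lemma stereoNumerator_snd (z : PC) (i : Fin 3) : (stereoNumerator z i).2 = 0 := by
  fin_cases i <;> simp [stereoNumerator, pj]

lemma nuC_snd (g : PC → PC) (p : PC) (i : Fin 3) : (nuC g p i).2 = 0 := by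
  simp [nuC_eq_smul_stereoNumerator, stereoNumerator_snd]

lemma smul_stereoNumeratorDz_sub (z : PC) (i : Fin 3) :
    (1 + pnormSq z) • stereoNumeratorDz z i - pmul (pconj z) (stereoNumerator z i) =
      V1 id z i := by
  fin_cases i <;> ext <;>
    simp [stereoNumerator, stereoNumeratorDz, V1, pone, pj, pnormSq] <;> ring

lemma smul_V1Dzbar_sub (z : PC) (i : Fin 3) :
    (1 + pnormSq z) • V1Dzbar z i - (2 : ℝ) • pmul z (V1 id z i) =
      (-2 : ℝ) • stereoNumerator z i := by
  fin_cases i <;> ext <;> simp [stereoNumerator, V1Dzbar, V1, pone, pj, pnormSq] <;> ring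

lemma hasWirtingerDerivAt_stereoNumerator (z : PC) (i : Fin 3) :
    HasWirtingerDerivAt (fun q => stereoNumerator q i) (stereoNumeratorDz z i)
      (pconj (stereoNumeratorDz z i)) z := by
  have h_id := hasWirtingerDerivAt_id z
  have h_pconj := hasWirtingerDerivAt_pconj z
  fin_cases i
  · refine (h_id.add h_pconj).congr_fderiv (congrArg₂ wirtingerCLM ?_ ?_) <;> ext <;>
      simp [stereoNumeratorDz, pone]
  · refine ((hasWirtingerDerivAt_const pj z).mul (h_id.sub h_pconj)).congr_fderiv
      (congrArg₂ wirtingerCLM ?_ ?_) <;> ext <;> simp [stereoNumeratorDz, pone, pj]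
  · refine (hasWirtingerDerivAt_comp_pnormSq
      ((hasDerivAt_id (pnormSq z)).const_sub 1)).congr_fderiv
      (congrArg₂ wirtingerCLM ?_ ?_) <;> ext <;> simp [stereoNumeratorDz]

lemma hasWirtingerDerivAt_V1_id (z : PC) (i : Fin 3) :
    HasWirtingerDerivAt (fun q => V1 id q i) 0 (V1Dzbar z i) z := by
  have h_pconj := hasWirtingerDerivAt_pconj z
  have h_one := hasWirtingerDerivAt_const pone z
  fin_cases i
  · refine (h_one.sub (h_pconj.mul h_pconj)).congr_fderiv
      (congrArg₂ wirtingerCLM ?_ ?_) <;> ext <;> simp [V1Dzbar, pone] <;> ring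
  · refine ((hasWirtingerDerivAt_const pj z).mul
      (h_one.add (h_pconj.mul h_pconj))).congr_fderiv
      (congrArg₂ wirtingerCLM ?_ ?_) <;> ext <;> simp [V1Dzbar, pone, pj] <;> ring
  · refine (HasFDerivAt.const_smul h_pconj (-2 : ℝ)).congr_fderiv ?_
    ext <;> simp [V1Dzbar, pone]

lemma hasWirtingerDerivAt_nuC_id (hw : 1 + pnormSq z ≠ 0) (i : Fin 3) :
    HasWirtingerDerivAt (fun q => nuC id q i) (stereoFrame z i) (pconj (stereoFrame z i)) z := by
  have h_inv : HasDerivAt (fun t : ℝ => 1 / (1 + t)) (-1 / (1 + pnormSq z) ^ 2) (pnormSq z) := by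
    simpa only [one_div] using ((hasDerivAt_id' (pnormSq z)).const_add 1).fun_inv hw
  have h_quot := (hasWirtingerDerivAt_stereoNumerator z i).radial_smul h_inv
  refine h_quot.congr_fderiv (congrArg₂ wirtingerCLM ?_ ?_) <;>
    rw [stereoFrame, ← smul_stereoNumeratorDz_sub] <;>
    ext <;> simp [stereoNumerator_snd] <;> field_simp <;> ring

lemma hasWirtingerDerivAt_stereoFrame (hw : 1 + pnormSq z ≠ 0) (i : Fin 3) :
    HasWirtingerDerivAt (fun q => stereoFrame q i)
      (-(2 / (1 + pnormSq z)) • pmul (pconj z) (stereoFrame z i))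
      (-(2 / (1 + pnormSq z) ^ 2) • nuC id z i) z := by
  have h_inv_sq : HasDerivAt (fun t : ℝ => ((1 + t) ^ 2)⁻¹) (-(2 / (1 + pnormSq z) ^ 3))
      (pnormSq z) := by
    refine ((((hasDerivAt_id' (pnormSq z)).const_add 1).fun_pow 2).fun_inv
      (pow_ne_zero 2 hw)).congr_deriv ?_
    simp only [Nat.cast_ofNat, Nat.add_one_sub_one, pow_one, mul_one]
    field_simp
  have h_quot := (hasWirtingerDerivAt_V1_id z i).radial_smul h_inv_sq
  refine h_quot.congr_fderiv (congrArg₂ wirtingerCLM ?_ ?_)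
  · ext <;> simp [stereoFrame] <;> field_simp
  · have h_nuC : -(2 / (1 + pnormSq z) ^ 2) • nuC id z i =
        ((1 + pnormSq z) ^ 3)⁻¹ • (-2 : ℝ) • stereoNumerator z i := by
      rw [nuC_eq_smul_stereoNumerator, Pi.smul_apply, smul_smul, smul_smul, id]
      congr 1
      field_simp
    rw [h_nuC, ← smul_V1Dzbar_sub]
    ext <;> simp <;> field_simp <;> ring

end StereographicProjection

section Tension

variable {g : PC → PC} {p : PC}

/-- The tension `g_{zz̄} - (2ḡ / (1 + |g|²)) g_z g_z̄`, whose vanishing is the harmonic map equation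
for `g`. -/
def tension (g : PC → PC) (p : PC) : PC :=
  Dzbar (Dz g) p -
    (2 / (1 + pnormSq (g p))) • pmul (pconj (g p)) (pmul (Dz g p) (Dzbar g p))

lemma tension_pconj (hg : ContDiffAt ℝ 2 g p) :
    tension (fun q => pconj (g q)) p = pconj (tension g p) := by
  have hg' := hg.differentiableAt two_ne_zero
  unfold tension
  rw [show Dzbar (Dz fun q => pconj (g q)) p = _ from Dzbar_Dz_pconj hg, Dz_pconj hg',
    Dzbar_pconj hg', pnormSq_pconj]
  ext <;> simp [-mul_eq_mul_left_iff] <;> ring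

lemma Dz_nuC (hg : DifferentiableAt ℝ g p) (hw : 1 + pnormSq (g p) ≠ 0) (i : Fin 3) :
    Dz (fun q => nuC g q i) p = pmul (stereoFrame (g p) i) (Dz g p) +
      pmul (pconj (stereoFrame (g p) i)) (pconj (Dzbar g p)) :=
  ((hasWirtingerDerivAt_nuC_id hw i).comp (hasWirtingerDerivAt_of_differentiableAt hg)).Dz_eq

lemma Dzbar_Dz_nuC (hg : ContDiffAt ℝ 2 g p) (hw : 1 + pnormSq (g p) ≠ 0) (i : Fin 3) :
    Dzbar (fun q => Dz (fun r => nuC g r i) q) p =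
      pmul (tension g p) (stereoFrame (g p) i) +
        pmul (pconj (tension g p)) (pconj (stereoFrame (g p) i)) -
        (2 / (1 + pnormSq (g p)) ^ 2 * (pnormSq (Dz g p) + pnormSq (Dzbar g p))) • nuC g p i := by
  have hw_near : ∀ᶠ q in nhds p, 1 + pnormSq (g q) ≠ 0 := by
    have h_cont : ContinuousAt (fun q => 1 + pnormSq (g q)) p := by
      have := hg.continuousAt
      unfold pnormSq
      fun_prop
    exact h_cont.eventually_ne hw
  have h_Dz : (fun q => Dz (fun r => nuC g r i) q) =ᶠ[nhds p] fun q =>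
      pmul (stereoFrame (g q) i) (Dz g q) +
        pmul (pconj (stereoFrame (g q) i)) (pconj (Dzbar g q)) := by
    filter_upwards [eventually_differentiableAt_of_contDiffAt hg, hw_near] with q hgq hwq
    exact Dz_nuC hgq hwq i
  have h_frame := (hasWirtingerDerivAt_stereoFrame hw i).comp
    (hasWirtingerDerivAt_of_differentiableAt (hg.differentiableAt two_ne_zero))
  have h_gz := hasWirtingerDerivAt_of_differentiableAt (hasFDerivAt_Dz hg).differentiableAt
  have h_gzbar := hasWirtingerDerivAt_of_differentiableAt (hasFDerivAt_Dzbar hg).differentiableAt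
  rw [Dz_Dzbar_comm hg] at h_gzbar
  have h_product := ((h_frame.mul h_gz).add (h_frame.conj.mul h_gzbar.conj)).Dzbar_eq
  refine (congrArg dzbarCoeff h_Dz.fderiv_eq).trans (h_product.trans ?_)
  rw [show nuC id (g p) i = nuC g p i from rfl]
  ext <;> simp [tension, nuC_snd] <;> simp [pnormSq] <;> ring

lemma exists_Dzbar_Dz_nuC_eq_smul_iff (hg : ContDiffAt ℝ 2 g p) (hw : 1 + pnormSq (g p) ≠ 0) :
    (∃ ρ : ℝ, ∀ i, Dzbar (fun q => Dz (fun r => nuC g r i) q) p = ρ • nuC g p i) ↔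
      tension g p = 0 := by
  simp only [Dzbar_Dz_nuC hg hw]
  set c := 2 / (1 + pnormSq (g p)) ^ 2 * (pnormSq (Dz g p) + pnormSq (Dzbar g p))
  constructor
  · rintro ⟨ρ, hρ⟩
    refine eq_zero_of_pmul_V1_add_pmul_V2_eq_smul_nuC hw (b := pconj (tension g p))
      (ρ := (1 + pnormSq (g p)) ^ 2 * (ρ + c)) fun i => ?_
    have h_frame := sub_eq_iff_eq_add.mp (hρ i)
    rw [mul_smul, add_smul, ← h_frame, V2_eq_pconj_V1, stereoFrame,
      show V1 id (g p) i = V1 g p i from rfl]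
    ext <;> simp <;> field_simp
  · intro h_zero
    exact ⟨-c, fun i => by simp [h_zero]⟩

end Tension

theorem stmt_12_general {g : PC → PC} {p : PC} (hg : ContDiffAt ℝ 2 g p)
    (hw : 1 + pnormSq (g p) ≠ 0) :
    (∃ ρ : ℝ, ∀ i, Dzbar (fun q => Dz (fun r => nuC g r i) q) p = ρ • nuC g p i) ↔
      Dzbar (fun q => Dz g q) p =
          (2 / (1 + pnormSq (g p))) • pmul (pconj (g p)) (pmul (Dz g p) (Dzbar g p)) ∧
        Dzbar (fun q => Dz (fun r => pconj (g r)) q) p =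
          (2 / (1 + pnormSq (g p))) •
            pmul (g p) (pmul (Dz (fun r => pconj (g r)) p)
              (Dzbar (fun r => pconj (g r)) p)) := by
  have h_conj : tension (fun q => pconj (g q)) p = 0 ↔ tension g p = 0 := by
    rw [tension_pconj hg, pconj_eq_zero]
  trans tension g p = 0 ∧ tension (fun q => pconj (g q)) p = 0
  · rw [h_conj, and_self, exists_Dzbar_Dz_nuC_eq_smul_iff hg hw]
  · simp only [tension, sub_eq_zero, pnormSq_pconj, pconj_pconj]

/-- `ν_{zz̄}` is a real multiple of `ν` at every point of `D` iff `g` satisfies the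
harmonic map equation `g_{zz̄} − (2ḡ/(1+|g|²))g_z g_z̄ = 0` and its conjugate, assuming
the generic-position (pointwise linear independence) hypothesis. -/
theorem stmt_12 (D : Set PC) (hD : IsOpen D) (g : PC → PC) (hg : ContDiff ℝ (⊤ : ℕ∞) g)
    (hinv : ∀ p, 1 + pnormSq (g p) ≠ 0)
    (hindep : ∀ p ∈ D, ∀ a b : PC, ∀ ρ : ℝ,
      (∀ i, pmul a (V1 g p i) + pmul b (V2 g p i) = ρ • nuC g p i) → a = 0 ∧ b = 0) :
    (∀ p ∈ D, ∃ ρ : ℝ, ∀ i,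
        Dzbar (fun q => Dz (fun r => nuC g r i) q) p = ρ • nuC g p i) ↔
    (∀ p ∈ D,
        Dzbar (fun q => Dz g q) p =
          (2 / (1 + pnormSq (g p))) • pmul (pconj (g p)) (pmul (Dz g p) (Dzbar g p)) ∧
        Dzbar (fun q => Dz (fun r => pconj (g r)) q) p =
          (2 / (1 + pnormSq (g p))) •
            pmul (g p) (pmul (Dz (fun r => pconj (g r)) p)
              (Dzbar (fun r => pconj (g r)) p))) :=
  forall₂_congr fun p _ => stmt_12_general (contDiff_infty.mp hg 2).contDiffAt (hinv p)
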